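/- arXiv:1409.7890 — 2 statements merged into one kernel-verified Lean document; each statement's English description precedes it below -/
import Mathlib

section
/- For the d-dimensional HEX board H(n,d), if every interior vertex is assigned a color in {1,...,d} (boundary vertices having their preassigned colors), then for some i ∈ {1,...,d} there is a path of vertices of color i in H(n,d) connecting a vertex with i-th coordinate -1 to a vertex with i-th coordinate n+1. -/
/-- A vertex of the `d`-dimensional HEX board `H(n,d)`: all coordinates in `[-1, n+1]`. -/
def inBoard (n d : ℕ) (v : Fin d → ℤ) : Prop := ∀ i, -1 ≤ v i ∧ v i ≤ (n : ℤ) + 1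

/-- Interior vertex of `H(n,d)`: all coordinates in `[0, n]`. -/
def interiorVertex (n d : ℕ) (v : Fin d → ℤ) : Prop := ∀ i, 0 ≤ v i ∧ v i ≤ (n : ℤ)

/-- Adjacency in `H(n,d)`: `v ≠ w` and `v - w ∈ {0,1}^d ∪ {0,-1}^d`. -/
def hexAdjD (d : ℕ) (v w : Fin d → ℤ) : Prop :=
  v ≠ w ∧ ((∀ i, v i - w i = 0 ∨ v i - w i = 1) ∨ (∀ i, v i - w i = 0 ∨ v i - w i = -1))

namespace HexAux

open Classical

abbrev T (D : ℕ) := (Fin (D+1) → ℤ) × Equiv.Perm (Fin (D+1)) × Fin (D+2)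

def V {D : ℕ} (t : T D) (m : ℕ) : Fin (D+1) → ℤ :=
  fun i => t.1 i + if (t.2.1 i : ℕ) < m then 1 else 0

noncomputable def piv {D : ℕ} (t : T D) : T D :=
  if t.2.2 = 0 then
    (fun i => t.1 i + if t.2.1 i = 0 then 1 else 0, t.2.1.trans (Equiv.subRight 1), Fin.last (D+1))
  else if t.2.2 = Fin.last (D+1) then
    (fun i => t.1 i - if t.2.1 i = Fin.last D then 1 else 0, t.2.1.trans (Equiv.addRight 1), 0)
  else
    (t.1, t.2.1.trans (Equiv.swap (Fin.ofNat (D+1) (t.2.2.val-1)) (Fin.ofNat (D+1) t.2.2.val)), t.2.2)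

theorem piv_zero {D : ℕ} (x : Fin (D+1) → ℤ) (p) :
    piv ((x, p, 0) : T D) = (fun i => x i + if p i = 0 then 1 else 0,
      p.trans (Equiv.subRight 1), Fin.last (D+1)) := by
  simp [piv]

theorem piv_last {D : ℕ} (x : Fin (D+1) → ℤ) (p) :
    piv ((x, p, Fin.last (D+1)) : T D) = (fun i => x i - if p i = Fin.last D then 1 else 0,
      p.trans (Equiv.addRight 1), 0) := by
  have : Fin.last (D+1) ≠ 0 := by simp [Fin.ext_iff]
  simp [piv]

theorem piv_mid {D : ℕ} (x : Fin (D+1) → ℤ) (p) (k : Fin (D+2)) (h0 : k ≠ 0)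
    (h1 : k ≠ Fin.last (D+1)) :
    piv ((x, p, k) : T D) = (x, p.trans (Equiv.swap (Fin.ofNat (D+1) (k.val-1))
      (Fin.ofNat (D+1) k.val)), k) := by
  simp [piv, h0, h1]

theorem piv_piv {D : ℕ} (t : T D) : piv (piv t) = t := by
  obtain ⟨x, p, k⟩ := t
  by_cases h0 : k = 0
  · subst h0
    rw [piv_zero, piv_last]
    refine Prod.ext ?_ (Prod.ext ?_ rfl)
    · funext i
      have : p i - 1 = Fin.last D ↔ p i = 0 := by
        constructor
        · intro h
          have h2 := eq_add_of_sub_eq h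
          rwa [Fin.last_add_one] at h2
        · intro h
          rw [h, sub_eq_iff_eq_add, Fin.last_add_one]
      simp [this]
    · ext i; simp
  by_cases h1 : k = Fin.last (D+1)
  · subst h1
    rw [piv_last, piv_zero]
    refine Prod.ext ?_ (Prod.ext ?_ rfl)
    · funext i
      have : p i + 1 = 0 ↔ p i = Fin.last D := by
        rw [← Fin.last_add_one, add_left_inj]
      simp [this]
    · ext i; simp
  · rw [piv_mid _ _ _ h0 h1, piv_mid _ _ _ h0 h1]
    refine Prod.ext rfl (Prod.ext ?_ rfl)
    ext i; simp

theorem mid_ne {D : ℕ} (k : Fin (D+2)) (h0 : k ≠ 0) (h1 : k ≠ Fin.last (D+1)) :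
    ((Fin.ofNat (D+1) (k.val-1) : Fin (D+1)) : ℕ) = k.val - 1 ∧
    ((Fin.ofNat (D+1) k.val : Fin (D+1)) : ℕ) = k.val ∧ 0 < k.val ∧ k.val < D + 1 := by
  have := k.isLt
  rw [Ne, Fin.ext_iff] at h0 h1
  simp only [Fin.val_zero, Fin.val_last] at h0 h1
  refine ⟨?_, ?_, by omega, by omega⟩
  · simp only [Fin.val_ofNat]; exact Nat.mod_eq_of_lt (by omega)
  · simp only [Fin.val_ofNat]; exact Nat.mod_eq_of_lt (by omega)

theorem piv_ne {D : ℕ} (t : T D) : piv t ≠ t := by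
  obtain ⟨x, p, k⟩ := t
  by_cases h0 : k = 0
  · subst h0
    rw [piv_zero]
    intro h
    have := congrArg (fun t : T D => (t.2.2 : ℕ)) h
    simp at this
  by_cases h1 : k = Fin.last (D+1)
  · subst h1
    rw [piv_last]
    intro h
    have := congrArg (fun t : T D => (t.2.2 : ℕ)) h
    simp at this
  · rw [piv_mid _ _ _ h0 h1]
    obtain ⟨ha, hb, hc, hd⟩ := mid_ne k h0 h1
    intro h
    have := congrArg (fun t : T D => (t.2.1 (p.symm (Fin.ofNat (D+1) k.val)) : ℕ)) h
    simp only [Equiv.trans_apply, Equiv.apply_symm_apply, Equiv.swap_apply_right] at this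
    omega

theorem piv_facet {D : ℕ} (t : T D) (m : ℕ) (hm : m ≤ D + 1) (hk : m ≠ (piv t).2.2.val) :
    ∃ m2 ≤ D + 1, m2 ≠ t.2.2.val ∧ V (piv t) m = V t m2 := by
  obtain ⟨x, p, k⟩ := t
  by_cases h0 : k = 0
  · subst h0
    rw [piv_zero] at *
    simp only [Fin.val_last] at hk
    refine ⟨m+1, by omega, by simp, ?_⟩
    funext i
    have h := (p i).isLt
    simp only [V, Equiv.trans_apply, Equiv.subRight_apply]
    rw [Fin.coe_sub_one]
    by_cases hp : p i = 0
    · simp [hp]; omega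
    · have : (p i : ℕ) ≠ 0 := fun hh => hp (Fin.ext hh)
      simp only [hp, if_false, add_zero]
      congr 1
      have : (p i : ℕ) - 1 < m ↔ (p i : ℕ) < m + 1 := by omega
      simp only [this]
  by_cases h1 : k = Fin.last (D+1)
  · subst h1
    rw [piv_last] at *
    simp only [Fin.val_zero] at hk
    refine ⟨m-1, by omega, by simp; omega, ?_⟩
    funext i
    have h := (p i).isLt
    simp only [V, Equiv.trans_apply, Equiv.coe_addRight, Fin.val_add_one]
    by_cases hp : p i = Fin.last D
    · simp [hp]; split_ifs <;> omega
    · have : (p i : ℕ) ≠ D := by simpa [Fin.ext_iff] using hp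
      simp only [hp, if_false, sub_zero]
      congr 1
      have : (p i : ℕ) + 1 < m ↔ (p i : ℕ) < m - 1 := by omega
      simp only [this]
  · rw [piv_mid _ _ _ h0 h1] at *
    obtain ⟨ha, hb, hc, hd⟩ := mid_ne k h0 h1
    simp only at hk
    refine ⟨m, hm, hk, ?_⟩
    funext i
    simp only [V, Equiv.trans_apply, Equiv.swap_apply_def]
    congr 1
    split_ifs with a b c d e f <;> simp only [Fin.ext_iff] at * <;> first | rfl | omega

/-- connected to the low side within color i -/
def A (n D : ℕ) (κ : (Fin (D+1) → ℤ) → Fin (D+1)) (v : Fin (D+1) → ℤ) : Prop :=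
  ∃ (k : ℕ) (q : ℕ → (Fin (D+1) → ℤ)),
    (∀ j ≤ k, inBoard n (D+1) (q j) ∧ κ (q j) = κ v) ∧
    (∀ j < k, hexAdjD (D+1) (q j) (q (j+1))) ∧ (q 0) (κ v) = -1 ∧ q k = v

theorem A_base {n D : ℕ} {κ : (Fin (D+1) → ℤ) → Fin (D+1)} {v : Fin (D+1) → ℤ}
    (hb : inBoard n (D+1) v) (h : v (κ v) = -1) : A n D κ v :=
  ⟨0, fun _ => v, by simp [hb], by simp, h, rfl⟩

theorem A_step {n D : ℕ} {κ : (Fin (D+1) → ℤ) → Fin (D+1)} {v w : Fin (D+1) → ℤ}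
    (hv : A n D κ v) (hb : inBoard n (D+1) w) (h : κ v = κ w) (ha : hexAdjD (D+1) v w) :
    A n D κ w := by
  obtain ⟨k, q, h1, h2, h3, h4⟩ := hv
  refine ⟨k+1, fun j => if j ≤ k then q j else w, ?_, ?_, ?_, ?_⟩
  · intro j hj
    by_cases hjk : j ≤ k
    · simp only [hjk, if_true]; rw [← h]; exact h1 j hjk
    · simp [hjk, hb]
  · intro j hj
    by_cases hjk : j + 1 ≤ k
    · simp only [hjk, show j ≤ k by omega, if_true]; exact h2 j hjk
    · have : j = k := by omega
      subst this
      simpa [h4] using ha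
  · simp [← h, h3]
  · simp

theorem V_adj {D : ℕ} (t : T D) (m m' : ℕ) (hm : m ≤ D + 1) (hm' : m' ≤ D + 1) (h : m ≠ m') :
    hexAdjD (D+1) (V t m) (V t m') := by
  rcases lt_or_gt_of_ne h with h | h
  · refine ⟨?_, Or.inr ?_⟩
    · intro he
      have := congrFun he (t.2.1.symm ⟨m, by omega⟩)
      simp [V, h] at this
    · intro i; simp only [V]; split_ifs <;> omega
  · refine ⟨?_, Or.inl ?_⟩
    · intro he
      have := congrFun he (t.2.1.symm ⟨m', by omega⟩)
      simp [V, h] at this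
    · intro i; simp only [V]; split_ifs <;> omega

def R (n : ℕ) {D : ℕ} (t : T D) : Prop := ∀ i, -1 ≤ t.1 i ∧ t.1 i ≤ n

def G (n D : ℕ) (κ : (Fin (D+1) → ℤ) → Fin (D+1)) (t : T D) : Prop :=
  R n t ∧ (∀ m ≤ D + 1, m ≠ t.2.2.val → A n D κ (V t m)) ∧
    ∀ c, ∃ m ≤ D + 1, m ≠ t.2.2.val ∧ κ (V t m) = c

theorem V_board {n D : ℕ} {t : T D} (h : R n t) (m : ℕ) : inBoard n (D+1) (V t m) := by
  intro i
  have := h i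
  simp only [V]; split_ifs <;> omega

theorem G_inj {n D : ℕ} {κ : (Fin (D+1) → ℤ) → Fin (D+1)} {t : T D} (h : G n D κ t)
    (a b : Fin (D+2)) (ha : a ≠ t.2.2) (hb : b ≠ t.2.2) (hab : κ (V t a) = κ (V t b)) : a = b := by
  have hs : Function.Surjective (fun m : Fin (D+1) => κ (V t (t.2.2.succAbove m))) := by
    intro c
    obtain ⟨m, hm, hk, hc⟩ := h.2.2 c
    obtain ⟨z, hz⟩ := Fin.exists_succAbove_eq (x := (⟨m, by omega⟩ : Fin (D+2))) (y := t.2.2)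
      (by rw [Ne, Fin.ext_iff]; exact hk)
    refine ⟨z, ?_⟩
    simp only [hz]; exact hc
  have hi := Finite.injective_iff_surjective.mpr hs
  obtain ⟨a', rfl⟩ := Fin.exists_succAbove_eq ha
  obtain ⟨b', rfl⟩ := Fin.exists_succAbove_eq hb
  rw [hi hab]

theorem G_partner {n D : ℕ} {κ : (Fin (D+1) → ℤ) → Fin (D+1)} {t : T D} (h : G n D κ t) :
    ∃ m : Fin (D+2), m ≠ t.2.2 ∧ κ (V t m) = κ (V t t.2.2) := by
  obtain ⟨m, hm, hk, hc⟩ := h.2.2 (κ (V t t.2.2))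
  exact ⟨⟨m, by omega⟩, by rw [Ne, Fin.ext_iff]; exact hk, hc⟩

theorem G_flip {n D : ℕ} {κ : (Fin (D+1) → ℤ) → Fin (D+1)} {t : T D} (h : G n D κ t)
    (m : Fin (D+2)) (hm : m ≠ t.2.2) (hc : κ (V t m) = κ (V t t.2.2)) :
    G n D κ (t.1, t.2.1, m) := by
  have hV : ∀ j, V ((t.1, t.2.1, m) : T D) j = V t j := fun _ => rfl
  have hm' : m.val ≠ t.2.2.val := by rwa [Ne, ← Fin.ext_iff]
  have hl := m.isLt
  have hl2 := t.2.2.isLt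
  refine ⟨h.1, ?_, ?_⟩
  · intro j hj hjm
    rw [hV]
    by_cases hjt : j = t.2.2.val
    · subst hjt
      exact A_step (h.2.1 m.val (by omega) hm') (V_board h.1 _) hc
        (V_adj _ _ _ (by omega) (by omega) hm')
    · exact h.2.1 j hj hjt
  · intro c
    obtain ⟨j, hj, hk, hc'⟩ := h.2.2 c
    by_cases hjm : j = m.val
    · refine ⟨t.2.2.val, by omega, hm'.symm, ?_⟩
      rw [hV, ← hc, ← hjm, hc']
    · exact ⟨j, hj, hjm, hc'⟩

noncomputable def S (n D : ℕ) (κ : (Fin (D+1) → ℤ) → Fin (D+1)) : Finset (T D) :=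
  ((Fintype.piFinset fun _ => Finset.Icc (-1 : ℤ) n) ×ˢ (Finset.univ ×ˢ Finset.univ)).filter
    (G n D κ)

theorem mem_S {n D : ℕ} {κ : (Fin (D+1) → ℤ) → Fin (D+1)} (t : T D) :
    t ∈ S n D κ ↔ G n D κ t := by
  simp only [S, Finset.mem_filter, Finset.mem_product, Finset.mem_univ, and_true,
    Fintype.mem_piFinset, Finset.mem_Icc, and_iff_right_iff_imp]
  exact fun h => h.1

theorem S_even (n D : ℕ) (κ : (Fin (D+1) → ℤ) → Fin (D+1)) :
    ∑ _t ∈ S n D κ, (1 : ZMod 2) = 0 := by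
  have hp : ∀ t : T D, ∃ m : Fin (D+2), G n D κ t → m ≠ t.2.2 ∧ κ (V t m) = κ (V t t.2.2) := by
    intro t
    by_cases h : G n D κ t
    · obtain ⟨m, hm⟩ := G_partner h
      exact ⟨m, fun _ => hm⟩
    · exact ⟨0, fun h' => absurd h' h⟩
  choose f hf using hp
  have hG : ∀ t, G n D κ t → G n D κ (t.1, t.2.1, f t) := fun t h =>
    G_flip h _ (hf t h).1 (hf t h).2
  refine Finset.sum_involution (fun t _ => (t.1, t.2.1, f t)) ?_ ?_ ?_ ?_
  · intros; decide
  · intro t ht _ he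
    exact (hf t ((mem_S t).1 ht)).1 (congrArg (fun t : T D => t.2.2) he)
  · intro t ht
    exact (mem_S _).2 (hG t ((mem_S t).1 ht))
  · intro t ht
    have h := (mem_S t).1 ht
    have h1 := hf t h
    have h2 := hf _ (hG t h)
    refine Prod.ext rfl (Prod.ext rfl ?_)
    by_contra hne
    exact h2.1 (G_inj h _ _ hne h1.1 h2.2)

def start (D : ℕ) : T D := (fun _ => -1, 1, Fin.last (D+1))

theorem G_start {n D : ℕ} {κ : (Fin (D+1) → ℤ) → Fin (D+1)}
    (hκ1 : ∀ v, inBoard n (D+1) v → (∃ i, v i = -1) →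
      v (κ v) = -1 ∧ ∀ j, v j = -1 → κ v ≤ j) : G n D κ (start D) := by
  have hR : R n (start D) := by intro i; simp only [start]; omega
  have key : ∀ m : Fin (D+1), V (start D) m (κ (V (start D) m)) = -1 ∧ κ (V (start D) m) = m := by
    intro m
    have hm : V (start D) m m = -1 := by simp [V, start]
    obtain ⟨h1, h2⟩ := hκ1 _ (V_board hR m) ⟨m, hm⟩
    refine ⟨h1, le_antisymm (h2 _ hm) ?_⟩
    by_contra hlt
    rw [not_le, Fin.lt_def] at hlt
    generalize κ (V (start D) m) = c at *
    simp [V, start, hlt] at h1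
  refine ⟨hR, ?_, ?_⟩
  · intro m hm hk
    simp only [start, Fin.val_last] at hk
    exact A_base (V_board hR _) (key ⟨m, by omega⟩).1
  · intro c
    exact ⟨c, by omega, by simp [start]; omega, (key c).2⟩

theorem eq_start {n D : ℕ} {κ : (Fin (D+1) → ℤ) → Fin (D+1)}
    (hκ1 : ∀ v, inBoard n (D+1) v → (∃ i, v i = -1) →
      v (κ v) = -1 ∧ ∀ j, v j = -1 → κ v ≤ j) (x : Fin (D+1) → ℤ) (p : Equiv.Perm (Fin (D+1)))
    (h : G n D κ (x, p, Fin.last (D+1))) (i : Fin (D+1)) (hi : p i = Fin.last D)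
    (hx : x i = -1) : (x, p, Fin.last (D+1)) = start D := by
  have key : ∀ c, x c = -1 ∧ ∀ j < c, x j = -1 → p j < p c := by
    intro c
    obtain ⟨m, hm, hk, hc⟩ := h.2.2 c
    simp only [Fin.val_last] at hk
    have hVi : V ((x, p, Fin.last (D+1)) : T D) m i = -1 := by
      simp [V, hx, hi]; omega
    obtain ⟨h1, h2⟩ := hκ1 _ (V_board h.1 m) ⟨i, hVi⟩
    rw [hc] at h1 h2
    have hr := (h.1 c).1
    simp only [V] at h1 hr h2
    have hpc : ¬ ((p c : ℕ) < m) := by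
      intro hh; simp only [hh, if_true] at h1; omega
    simp only [hpc, if_false, add_zero] at h1
    refine ⟨h1, ?_⟩
    intro j hj hxj
    by_contra hlt
    rw [not_lt, Fin.le_def] at hlt
    have := h2 j (by rw [if_neg (by omega), hxj]; rfl)
    exact absurd hj (not_lt.2 this)
  have hmono : StrictMono p := fun a b hab => (key b).2 a hab (key a).1
  have hid : p = 1 := by
    have := Subsingleton.elim (hmono.orderIsoOfSurjective _ p.surjective) (OrderIso.refl _)
    ext i
    have := congrArg (fun e : Fin (D+1) ≃o Fin (D+1) => (e i : ℕ)) this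
    simpa using this
  subst hid
  exact Prod.ext (funext fun c => (key c).1) rfl

theorem G_piv {n D : ℕ} {κ : (Fin (D+1) → ℤ) → Fin (D+1)}
    (hκ1 : ∀ v, inBoard n (D+1) v → (∃ i, v i = -1) →
      v (κ v) = -1 ∧ ∀ j, v j = -1 → κ v ≤ j)
    (hwin : ∀ v, A n D κ v → v (κ v) ≠ (n : ℤ) + 1)
    (t : T D) (h : G n D κ t) (hs : t ≠ start D) : G n D κ (piv t) := by
  refine ⟨?_, ?_, ?_⟩
  · obtain ⟨x, p, k⟩ := t
    by_cases h0 : k = 0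
    · subst h0
      rw [piv_zero]
      intro i
      have hr := h.1 i
      simp only at hr ⊢
      by_cases hp : p i = 0
      · rw [if_pos hp]
        refine ⟨by omega, ?_⟩
        by_contra hlt
        obtain ⟨m, hm, hk, hc⟩ := h.2.2 i
        refine hwin _ (h.2.1 m hm hk) ?_
        rw [hc]
        have : 0 < m := by simp at hk; omega
        simp [V, hp, this]
        omega
      · rw [if_neg hp]; omega
    by_cases h1 : k = Fin.last (D+1)
    · subst h1
      rw [piv_last]
      intro i
      have hr := h.1 i
      simp only at hr ⊢
      by_cases hp : p i = Fin.last D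
      · rw [if_pos hp]
        refine ⟨?_, by omega⟩
        by_contra hlt
        exact hs (eq_start hκ1 x p h i hp (by omega))
      · rw [if_neg hp]; omega
    · rw [piv_mid _ _ _ h0 h1]; exact h.1
  · intro m hm hk
    obtain ⟨m2, hm2, hk2, he⟩ := piv_facet t m hm hk
    rw [he]; exact h.2.1 m2 hm2 hk2
  · intro c
    obtain ⟨m, hm, hk, hc⟩ := h.2.2 c
    obtain ⟨m2, hm2, hk2, he⟩ := piv_facet (piv t) m hm (by rwa [piv_piv])
    rw [piv_piv] at he
    exact ⟨m2, hm2, hk2, by rw [← he, hc]⟩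

theorem piv_ne_start {n D : ℕ} (t : T D) (h : R n t) : piv t ≠ start D := by
  intro he
  have h2 : t = piv (start D) := by rw [← he, piv_piv]
  have := (h (Fin.last D)).1
  rw [h2, start, piv_last] at this
  simp at this

theorem main {n D : ℕ} {κ : (Fin (D+1) → ℤ) → Fin (D+1)}
    (hκ1 : ∀ v, inBoard n (D+1) v → (∃ i, v i = -1) →
      v (κ v) = -1 ∧ ∀ j, v j = -1 → κ v ≤ j) :
    ∃ v, A n D κ v ∧ v (κ v) = (n : ℤ) + 1 := by
  by_contra hcon
  push Not at hcon
  have h1 : ∑ _t ∈ (S n D κ).erase (start D), (1 : ZMod 2) = 0 := by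
    refine Finset.sum_involution (fun t _ => piv t) ?_ ?_ ?_ ?_
    · intros; decide
    · intro t _ _; exact piv_ne t
    · intro t ht
      rw [Finset.mem_erase, mem_S] at ht ⊢
      exact ⟨piv_ne_start t ht.2.1, G_piv hκ1 hcon t ht.2 ht.1⟩
    · intro t _; exact piv_piv t
  have h2 := Finset.sum_erase_add (S n D κ) (fun _ => (1 : ZMod 2))
    ((mem_S _).2 (G_start hκ1))
  rw [h1, S_even] at h2
  exact absurd h2 (by decide)

end HexAux

/-- **The `d`-dimensional HEX theorem.** For any coloring `κ` of the vertices of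
`H(n,d)` with colors in `{1,…,d}` (here `Fin d`) that assigns to each boundary
vertex its preassigned color (the least `i` with `v i = -1` if it exists,
and otherwise the least `i` with `v i = n+1`), there is a color `i` and a path of
vertices of color `i` joining a vertex with `i`-th coordinate `-1` to a vertex
with `i`-th coordinate `n+1`. -/
theorem hex_theorem_dim (n d : ℕ) (hd : 0 < d) (κ : (Fin d → ℤ) → Fin d)
    (hκ1 : ∀ v, inBoard n d v → (∃ i, v i = -1) →
      v (κ v) = -1 ∧ ∀ j, v j = -1 → κ v ≤ j)
    (hκ2 : ∀ v, inBoard n d v → (¬ ∃ i, v i = -1) → (∃ i, v i = (n : ℤ) + 1) →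
      v (κ v) = (n : ℤ) + 1 ∧ ∀ j, v j = (n : ℤ) + 1 → κ v ≤ j) :
    ∃ (i : Fin d) (k : ℕ) (q : Fin (k+1) → (Fin d → ℤ)),
      (∀ j, inBoard n d (q j) ∧ κ (q j) = i) ∧
      (∀ j : Fin k, hexAdjD d (q j.castSucc) (q j.succ)) ∧
      (q 0) i = -1 ∧ (q (Fin.last k)) i = (n : ℤ) + 1 := by

  obtain _ | D := d
  · omega
  obtain ⟨v, ⟨k, q, h1, h2, h3, h4⟩, hv⟩ := HexAux.main (κ := κ) hκ1
  refine ⟨κ v, k, fun j => q j, fun j => h1 j (by omega), fun j => ?_, h3, ?_⟩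
  · exact h2 j j.isLt
  · simpa [h4] using hv
end

section
/- Let P be a compact convex polytope and f: P → P a continuous map such that f(F) ⊆ F for every face F of P. Then f is surjective. -/
/-- `F` is a face of the convex set `P`: either `P` itself, or the intersection of
`P` with a supporting hyperplane. -/
def IsFaceOf {E : Type*} [NormedAddCommGroup E] [NormedSpace ℝ E] (F P : Set E) : Prop :=
  F = P ∨ ∃ (l : E →L[ℝ] ℝ) (c : ℝ), (∀ x ∈ P, l x ≤ c) ∧ F = {x ∈ P | l x = c}

open Finset in
lemma sp_cell {I U : Type} [Fintype I] [DecidableEq I] [DecidableEq U] (c : U → I) (i0 : I)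
    (B : Finset U) (hB : B.card = Fintype.card I) :
    ({b ∈ B | (B.erase b).image c = univ.erase i0}.card : ZMod 2)
      = if B.image c = univ then 1 else 0 := by
  classical
  split_ifs with h
  · have hinj : Set.InjOn c B := by
      rw [← Finset.card_image_iff, h, hB]; rfl
    obtain ⟨b0, hb0, hc0⟩ : ∃ b ∈ B, c b = i0 := by
      have : i0 ∈ B.image c := by rw [h]; simp
      simpa using this
    have : {b ∈ B | (B.erase b).image c = univ.erase i0} = {b0} := by
      ext b
      simp only [mem_filter, mem_singleton]
      constructor
      · rintro ⟨hb, he⟩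
        by_contra hne
        have : i0 ∈ (B.erase b).image c :=
          mem_image.2 ⟨b0, mem_erase.2 ⟨fun h => hne h.symm, hb0⟩, hc0⟩
        rw [he] at this
        simp at this
      · rintro rfl
        refine ⟨hb0, ?_⟩
        ext i
        simp only [mem_image, mem_erase, mem_univ, and_true]
        constructor
        · rintro ⟨x, ⟨hx, hxB⟩, rfl⟩ he
          exact hx (hinj hxB hb0 (he.trans hc0.symm))
        · intro hi
          have : i ∈ B.image c := by rw [h]; simp
          obtain ⟨x, hx, rfl⟩ := mem_image.1 this
          exact ⟨x, ⟨fun e => hi (e ▸ hc0), hx⟩, rfl⟩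
    rw [this]; simp
  · by_cases hne : ∃ b ∈ B, (B.erase b).image c = univ.erase i0
    · obtain ⟨b, hb, he⟩ := hne
      have hcard : (B.erase b).card = ((B.erase b).image c).card := by
        rw [he, card_erase_of_mem hb, card_erase_of_mem (mem_univ _), hB]; rfl
      have hinj : Set.InjOn c (B.erase b) := Finset.card_image_iff.1 hcard.symm
      have hcb : c b ≠ i0 := by
        intro hcb
        apply h
        rw [← insert_erase hb, image_insert, he, hcb, insert_erase (mem_univ _)]
      obtain ⟨b', hb', hc'⟩ : ∃ b' ∈ B.erase b, c b' = c b := by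
        have : c b ∈ (B.erase b).image c := by rw [he]; simp [hcb]
        simpa using this
      have hbb : b' ≠ b := (mem_erase.1 hb').1
      have hb'B : b' ∈ B := (mem_erase.1 hb').2
      have : {b ∈ B | (B.erase b).image c = univ.erase i0} = {b, b'} := by
        ext x
        simp only [mem_filter, mem_singleton, mem_insert]
        constructor
        · rintro ⟨hx, hex⟩
          by_contra hh
          push Not at hh
          have hcard : (B.erase x).card = ((B.erase x).image c).card := by
            rw [hex, card_erase_of_mem hx, card_erase_of_mem (mem_univ _), hB]; rfl
          have hinjx : Set.InjOn c (B.erase x) := Finset.card_image_iff.1 hcard.symm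
          exact hbb (hinjx (by simp [hb'B, hh.2.symm]) (by simp [hb, hh.1.symm]) hc')
        · rintro (rfl | rfl)
          · exact ⟨hb, he⟩
          · refine ⟨hb'B, ?_⟩
            rw [← he]
            ext i
            simp only [mem_image, mem_erase]
            constructor
            · rintro ⟨y, ⟨hy, hyB⟩, rfl⟩
              by_cases hyb : y = b
              · exact ⟨x, ⟨hbb, hb'B⟩, by rw [hyb, hc']⟩
              · exact ⟨y, ⟨hyb, hyB⟩, rfl⟩
            · rintro ⟨y, ⟨hy, hyB⟩, rfl⟩
              by_cases hyb : y = x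
              · exact ⟨b, ⟨hbb.symm, hb⟩, by rw [hyb, hc']⟩
              · exact ⟨y, ⟨hyb, hyB⟩, rfl⟩
      rw [this, card_pair hbb.symm]; rfl
    · push Not at hne
      rw [filter_false_of_mem hne]; simp

def SDom {I U L : Type} [LinearOrder L] (u : I → U → L) (B : Finset U) : Prop :=
  ∀ y, ∃ i, ∀ x ∈ B, u i y ≤ u i x

open Finset Classical in
lemma sp_door {I U L : Type} [Fintype I] [Fintype U] [LinearOrder L]
    (u : I → U → L) (hu : ∀ i, Function.Injective (u i)) (A : Finset U)
    (hA : A.card + 1 = Fintype.card I) (hne : A.Nonempty)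
    (hM : ∀ a, ∃ y, ∀ i, i ≠ a → ∃ x ∈ A, u i x < u i y) :
    ({b | b ∉ A ∧ SDom u (insert b A)} : Finset U).card = (0 : ZMod 2) := by
  by_cases hD : SDom u A
  swap
  · rw [filter_false_of_mem]; · simp
    rintro b - ⟨-, h⟩
    apply hD
    intro y
    obtain ⟨i, hi⟩ := h y
    exact ⟨i, fun x hx => hi x (mem_insert_of_mem hx)⟩
  choose m hmA hm using fun i => A.exists_min_image (u i) hne
  have surj : ∀ x ∈ A, ∃ i, m i = x := by
    intro x hx
    obtain ⟨i, hi⟩ := hD x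
    exact ⟨i, hu i (le_antisymm (hm i x hx) (hi _ (hmA i)))⟩
  have key : ∀ J : Finset I, J.card ≤ A.card → (∀ x ∈ A, ∃ i ∈ J, m i = x) →
      Set.InjOn m J := by
    intro J hJ hs
    have h1 : J.image m = A := by
      ext x
      simp only [mem_image]
      constructor
      · rintro ⟨i, -, rfl⟩; exact hmA i
      · exact hs x
    apply Finset.card_image_iff.1
    apply le_antisymm card_image_le
    rw [h1]; exact hJ
  obtain ⟨a, b, hab, hmab⟩ : ∃ a b, a ≠ b ∧ m a = m b := by
    obtain ⟨a, -, b, -, h, h'⟩ := exists_ne_map_eq_of_card_lt_of_maps_to (s := univ) (t := A) (f := m)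
      (by rw [card_univ]; omega) (fun i _ => hmA i)
    exact ⟨a, b, h, h'⟩
  have dm : ∀ y, ∃ i, u i y ≤ u i (m i) := by
    intro y
    obtain ⟨i, hi⟩ := hD y
    exact ⟨i, hi _ (hmA i)⟩
  -- forward direction
  have fwd : ∀ x, x ∉ A → SDom u (insert x A) → ∃ k, (k = a ∨ k = b) ∧
      (∀ i, i ≠ k → u i (m i) < u i x) ∧
      ∀ y, (∀ i, i ≠ k → u i (m i) < u i y) → u k y ≤ u k x := by
    intro x hxA hx
    obtain ⟨k, hk⟩ := hx x
    have hkk : u k x ≤ u k (m k) := hk _ (mem_insert_of_mem (hmA k))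
    let J : Finset I := {j | u j (m j) < u j x}
    have hkJ : k ∉ J := by simp [J, hkk]
    have hJs : ∀ z ∈ A, ∃ i ∈ J, m i = z := by
      intro z hz
      obtain ⟨j, hj⟩ := hx z
      have e : m j = z := hu j (le_antisymm (hm j z hz) (hj _ (mem_insert_of_mem (hmA j))))
      refine ⟨j, ?_, e⟩
      simp only [J, mem_filter, mem_univ, true_and, e]
      apply lt_of_le_of_ne (hj x (mem_insert_self _ _))
      intro h
      exact hxA (hu j h ▸ hz)
    have hJc : A.card ≤ J.card := by
      have : A ⊆ J.image m := by
        intro z hz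
        simpa using hJs z hz
      exact (card_le_card this).trans card_image_le
    have hJe : J = univ.erase k := by
      apply eq_of_subset_of_card_le
      · intro j hj
        simp only [mem_erase, mem_univ, and_true]
        rintro rfl; exact hkJ hj
      · rw [card_erase_of_mem (mem_univ _), card_univ]; omega
    have hJi : Set.InjOn m J := by
      apply key J _ hJs
      rw [hJe, card_erase_of_mem (mem_univ _), card_univ]; omega
    have hJ' : ∀ i, i ≠ k → u i (m i) < u i x := by
      intro i hi
      have : i ∈ J := by rw [hJe]; simp [hi]
      simpa [J] using this
    refine ⟨k, ?_, hJ', ?_⟩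
    · by_contra hh
      push Not at hh
      apply hab
      apply hJi _ _ hmab
      · rw [hJe]; simp [hh.1.symm]
      · rw [hJe]; simp [hh.2.symm]
    · intro y hy
      obtain ⟨i, hi⟩ := hx y
      by_cases hik : i = k
      · subst hik; exact hi x (mem_insert_self _ _)
      · exact absurd (hi _ (mem_insert_of_mem (hmA i))) (not_le.2 (hy i hik))
  have ex : ∀ k l, k ≠ l → m k = m l → ∃ x, (x ∉ A ∧ SDom u (insert x A)) ∧
      (∀ i, i ≠ k → u i (m i) < u i x) ∧
      ∀ y, (∀ i, i ≠ k → u i (m i) < u i y) → u k y ≤ u k x := by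
    intro k l hkl hml
    obtain ⟨x, hx, hxm⟩ := Finset.exists_max_image
      ({y | ∀ i, i ≠ k → u i (m i) < u i y} : Finset U) (u k) (by
        obtain ⟨y, hy⟩ := hM k
        refine ⟨y, ?_⟩
        simp only [mem_filter, mem_univ, true_and]
        intro i hi
        obtain ⟨x, hxA, hx⟩ := hy i hi
        exact (hm i x hxA).trans_lt hx)
    simp only [mem_filter, mem_univ, true_and] at hx hxm
    have hk : ∀ y, (∀ i, i ≠ k → u i (m i) < u i y) → u k y ≤ u k (m k) := by
      intro y hy
      obtain ⟨i, hi⟩ := dm y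
      by_cases hik : i = k
      · subst hik; exact hi
      · exact absurd hi (not_le.2 (hy i hik))
    refine ⟨x, ⟨?_, ?_⟩, hx, hxm⟩
    · intro hxA
      have : x = m k := hu k (le_antisymm (hk x hx) (hm k x hxA))
      have h2 := hx l hkl.symm
      rw [this, hml] at h2
      exact lt_irrefl _ h2
    · intro y
      by_cases hy : ∀ i, i ≠ k → u i (m i) < u i y
      · refine ⟨k, fun z hz => ?_⟩
        rcases mem_insert.1 hz with rfl | hz
        · exact hxm y hy
        · exact (hk y hy).trans (hm k z hz)
      · push Not at hy
        obtain ⟨i, hik, hi⟩ := hy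
        refine ⟨i, fun z hz => ?_⟩
        rcases mem_insert.1 hz with rfl | hz
        · exact hi.trans (hx i hik).le
        · exact hi.trans (hm i z hz)
  obtain ⟨xa, hxa, hxa1, hxa2⟩ := ex a b hab hmab
  obtain ⟨xb, hxb, hxb1, hxb2⟩ := ex b a hab.symm hmab.symm
  have hxab : xa ≠ xb := by
    rintro rfl
    obtain ⟨i, hi⟩ := dm xa
    by_cases h : i = a
    · exact absurd hi (not_le.2 (hxb1 i (h ▸ hab)))
    · exact absurd hi (not_le.2 (hxa1 i h))
  have : ({b | b ∉ A ∧ SDom u (insert b A)} : Finset U) = {xa, xb} := by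
    ext x
    simp only [mem_filter, mem_univ, true_and, mem_insert, mem_singleton]
    constructor
    · rintro ⟨h1, h2⟩
      obtain ⟨k, hk, h3, h4⟩ := fwd x h1 h2
      rcases hk with rfl | rfl
      · left; exact hu k (le_antisymm (hxa2 x h3) (h4 xa hxa1))
      · right; exact hu k (le_antisymm (hxb2 x h3) (h4 xb hxb1))
    · rintro (rfl | rfl)
      · exact hxa
      · exact hxb
  rw [this, card_pair hxab]; rfl

open Finset Classical in
lemma scarf {I T L : Type} [Fintype I] [Fintype T] [Nonempty I] [Nonempty T] [LinearOrder L]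
    (u : I → T ⊕ I → L) (hu : ∀ i, Function.Injective (u i))
    (h2 : ∀ i t, u i (.inr i) < u i (.inl t))
    (h3 : ∀ i j t, i ≠ j → u i (.inl t) < u i (.inr j)) (c : T → I) :
    ∃ B : Finset (T ⊕ I), SDom u B ∧ B.image (Sum.elim c id) = univ := by
  let i0 : I := Classical.arbitrary I
  let c' : T ⊕ I → I := Sum.elim c id
  let B0 : Finset (T ⊕ I) := (univ.erase i0).image Sum.inr
  have hB0c : B0.image c' = univ.erase i0 := by
    ext i
    simp [B0, c']
  have hmin : ∀ j x, u j (.inr j) ≤ u j x := by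
    rintro j (t | k)
    · exact (h2 j t).le
    · by_cases h : j = k
      · rw [h]
      · exact ((h2 j (Classical.arbitrary T)).trans (h3 j k _ h)).le
  have hB0 : ({b | b ∉ B0 ∧ SDom u (insert b B0)} : Finset (T ⊕ I)).card = 1 := by
    obtain ⟨t, -, ht⟩ := exists_max_image (univ : Finset T) (fun t => u i0 (.inl t)) univ_nonempty
    rw [card_eq_one]
    refine ⟨.inl t, ?_⟩
    ext x
    simp only [mem_filter, mem_univ, true_and, mem_singleton]
    constructor
    · rintro ⟨hx, hd⟩
      obtain ⟨i, hi⟩ := hd (.inl t)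
      have hii : i = i0 := by
        by_contra hii
        have := hi (.inr i) (mem_insert_of_mem (by simp [B0, hii]))
        exact absurd this (not_le.2 (h2 i t))
      rw [hii] at hi
      have h4 := hi x (mem_insert_self _ _)
      rcases x with s | j
      · exact hu _ (le_antisymm (ht s (mem_univ _)) h4)
      · have : j = i0 := by
          by_contra hj
          exact hx (by simpa [B0] using hj)
        rw [this] at h4
        exact absurd h4 (not_le.2 (h2 _ t))
    · rintro rfl
      refine ⟨by simp [B0], ?_⟩
      rintro (s | j)
      · refine ⟨i0, fun x hx => ?_⟩
        rcases mem_insert.1 hx with rfl | hx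
        · exact ht s (mem_univ _)
        · simp only [B0, mem_image, mem_erase, mem_univ, and_true] at hx
          obtain ⟨k, hk, rfl⟩ := hx
          exact (h3 i0 k s (Ne.symm hk)).le
      · exact ⟨j, fun x _ => hmin j x⟩
  have hdoor : ∀ A : Finset (T ⊕ I), A.card + 1 = Fintype.card I → A.image c' = univ.erase i0 →
      (({b | b ∉ A ∧ SDom u (insert b A)} : Finset (T ⊕ I)).card : ZMod 2) =
        if A = B0 then 1 else 0 := by
    intro A hAc hA
    split_ifs with hAB
    · rw [hAB, hB0]; simp
    · obtain ⟨t, ht⟩ : ∃ t, Sum.inl t ∈ A := by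
        by_contra hno
        push Not at hno
        apply hAB
        have hinr : ∀ x ∈ A, x = Sum.inr (c' x) := by
          rintro (t | j) hx
          · exact absurd hx (hno t)
          · rfl
        ext x
        simp only [B0, ← hA, image_image, mem_image, Function.comp]
        constructor
        · intro hx; exact ⟨x, hx, (hinr x hx).symm⟩
        · rintro ⟨y, hy, rfl⟩; rw [← hinr y hy]; exact hy
      convert sp_door u hu A hAc ⟨_, ht⟩ (fun a => ⟨.inr a, fun i hi => ⟨_, ht, h3 i a t hi⟩⟩)
  let cells : Finset (Finset (T ⊕ I)) := {B | B.card = Fintype.card I ∧ SDom u B}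
  let doors : Finset (Finset (T ⊕ I)) :=
    {A | A.card + 1 = Fintype.card I ∧ A.image c' = univ.erase i0}
  have hcount : ∑ B ∈ cells, {b ∈ B | (B.erase b).image c' = univ.erase i0}.card =
      ∑ A ∈ doors, ({b | b ∉ A ∧ SDom u (insert b A)} : Finset (T ⊕ I)).card := by
    rw [← card_sigma, ← card_sigma]
    refine card_bij' (fun p _ => ⟨p.1.erase p.2, p.2⟩) (fun p _ => ⟨insert p.2 p.1, p.2⟩) ?_ ?_ ?_ ?_
    · rintro ⟨B, b⟩ h
      simp only [cells, doors, mem_sigma, mem_filter, mem_univ, true_and] at h ⊢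
      obtain ⟨⟨h1, h2⟩, hb, h4⟩ := h
      refine ⟨⟨?_, h4⟩, by simp, by rwa [insert_erase hb]⟩
      rw [card_erase_add_one hb, h1]
    · rintro ⟨A, b⟩ h
      simp only [cells, doors, mem_sigma, mem_filter, mem_univ, true_and] at h ⊢
      obtain ⟨⟨h1, h2⟩, hb, h4⟩ := h
      refine ⟨⟨?_, h4⟩, by simp, by rwa [erase_insert hb]⟩
      rw [card_insert_of_notMem hb, h1]
    · rintro ⟨B, b⟩ h
      simp only [cells, mem_sigma, mem_filter, mem_univ, true_and] at h
      simp only [insert_erase h.2.1]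
    · rintro ⟨A, b⟩ h
      simp only [doors, mem_sigma, mem_filter, mem_univ, true_and] at h
      simp only [erase_insert h.2.1]
  have hcount2 := congrArg (Nat.cast : ℕ → ZMod 2) hcount
  push_cast at hcount2
  have hR : ∑ A ∈ doors, ((({b | b ∉ A ∧ SDom u (insert b A)} : Finset (T ⊕ I)).card : ℕ) : ZMod 2)
      = 1 := by
    rw [sum_congr rfl (fun A hA => hdoor A (mem_filter.1 hA).2.1 (mem_filter.1 hA).2.2)]
    rw [sum_ite_eq']
    rw [if_pos]
    simp only [doors, mem_filter, mem_univ, true_and]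
    refine ⟨?_, hB0c⟩
    rw [card_image_of_injective _ Sum.inr_injective, card_erase_add_one (mem_univ _), card_univ]
  rw [hR, sum_congr rfl (fun B hB => sp_cell c' i0 B (mem_filter.1 hB).2.1)] at hcount2
  obtain ⟨B, hB, hne⟩ := exists_ne_zero_of_sum_ne_zero (hcount2.trans_ne one_ne_zero)
  refine ⟨B, (mem_filter.1 hB).2.2, ?_⟩
  by_contra hh
  exact hne (if_neg hh)

open Finset Classical in
lemma kkm_approx {I : Type} [Fintype I] [Nonempty I] (K : I → Set (I → ℝ))
    (hK : ∀ x ∈ stdSimplex ℝ I, ∃ i, x ∈ K i) (e : ℝ) (he : 0 < e) :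
    ∃ x ∈ stdSimplex ℝ I, ∀ j, x j < e ∨ ∃ y ∈ K j, dist x y < e := by
  have hk : (0 : ℝ) < Fintype.card I := by exact_mod_cast Fintype.card_pos
  set k : ℝ := ((Fintype.card I : ℕ) : ℝ) with hkdef
  obtain ⟨T, hTs, hTf, hT⟩ := (isCompact_stdSimplex ℝ I).finite_cover_balls (div_pos he hk)
  have : Fintype T := hTf.fintype
  obtain ⟨z0, hz0⟩ : (stdSimplex ℝ I).Nonempty := ⟨_, single_mem_stdSimplex ℝ (Classical.arbitrary I)⟩
  have hne : Nonempty T := by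
    have := hT hz0
    simp only [Set.mem_iUnion] at this
    obtain ⟨t, ht, -⟩ := this
    exact ⟨⟨t, ht⟩⟩
  choose c hc using fun t : T => hK t.1 (hTs t.2)
  let eT := Fintype.equivFin T
  let eI := Fintype.equivFin I
  let u : I → T ⊕ I → ℝ ×ₗ ℕ := fun i => Sum.elim (fun t => toLex (t.1 i, (eT t : ℕ)))
    (fun j => if i = j then toLex (-1, 0) else toLex (2, (eI j : ℕ)))
  have hT0 : ∀ (t : T) i, 0 ≤ t.1 i := fun t i => (hTs t.2).1 i
  have hT1 : ∀ (t : T) i, t.1 i ≤ 1 := fun t i => by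
    rw [← (hTs t.2).2]
    exact single_le_sum (fun i _ => hT0 t i) (mem_univ i)
  have h2 : ∀ i t, u i (.inr i) < u i (.inl t) := by
    intro i t
    simp only [u, Sum.elim_inr, Sum.elim_inl, if_true, Prod.Lex.toLex_lt_toLex]
    left; linarith [hT0 t i]
  have h3 : ∀ i j t, i ≠ j → u i (.inl t) < u i (.inr j) := by
    intro i j t hij
    simp only [u, Sum.elim_inr, Sum.elim_inl, if_neg hij, Prod.Lex.toLex_lt_toLex]
    left; linarith [hT1 t i]
  have hu : ∀ i, Function.Injective (u i) := by
    rintro i (s | j) (t | l) h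
    · simp only [u, Sum.elim_inl, EmbeddingLike.apply_eq_iff_eq, Prod.mk.injEq] at h
      rw [eT.injective (Fin.ext h.2)]
    · by_cases hl : i = l
      · subst hl; exact absurd h (h2 i s).ne'
      · exact absurd h (h3 i l s hl).ne
    · by_cases hl : i = j
      · subst hl; exact absurd h (h2 i t).ne
      · exact absurd h (h3 i j t hl).ne'
    · simp only [u, Sum.elim_inr] at h
      split_ifs at h with h5 h6 h6
      · rw [← h5, ← h6]
      · simp only [EmbeddingLike.apply_eq_iff_eq, Prod.mk.injEq] at h
        norm_num at h
      · simp only [EmbeddingLike.apply_eq_iff_eq, Prod.mk.injEq] at h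
        norm_num at h
      · simp only [EmbeddingLike.apply_eq_iff_eq, Prod.mk.injEq] at h
        rw [eI.injective (Fin.ext h.2)]
  obtain ⟨B, hB, hBc⟩ := scarf u hu h2 h3 c
  have hcol : ∀ i, Sum.inr i ∉ B → ∃ t, Sum.inl t ∈ B ∧ c t = i := by
    intro i hi
    have : i ∈ B.image (Sum.elim c id) := by rw [hBc]; simp
    obtain ⟨x, hx, hxi⟩ := mem_image.1 this
    rcases x with t | j
    · exact ⟨t, hx, hxi⟩
    · simp only [Sum.elim_inr, id] at hxi
      exact absurd (hxi ▸ hx) hi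
  have hdom : ∀ y : T, ∃ i, Sum.inr i ∉ B ∧ ∀ t : T, Sum.inl t ∈ B → y.1 i ≤ t.1 i := by
    intro y
    obtain ⟨i, hi⟩ := hB (.inl y)
    refine ⟨i, fun h => absurd (hi _ h) (not_le.2 (h2 i y)), fun t ht => ?_⟩
    have := hi _ ht
    simp only [u, Sum.elim_inl, Prod.Lex.toLex_le_toLex] at this
    rcases this with h | h
    · exact h.le
    · exact h.1.le
  obtain ⟨t0, ht0⟩ : ∃ t, Sum.inl t ∈ B := by
    obtain ⟨i, hi, -⟩ := hdom (Classical.arbitrary T)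
    obtain ⟨t, ht, -⟩ := hcol i hi
    exact ⟨t, ht⟩
  let σ : Finset T := {t | Sum.inl t ∈ B}
  have hσ : ∀ t, t ∈ σ ↔ Sum.inl t ∈ B := by simp [σ]
  choose s hs hsm using fun i => σ.exists_min_image (fun t => t.1 i) ⟨t0, (hσ _).2 ht0⟩
  let m : I → ℝ := fun i => if Sum.inr i ∈ B then 0 else (s i).1 i
  have hm0 : ∀ i, 0 ≤ m i := by
    intro i; simp only [m]; split_ifs
    · exact le_rfl
    · exact hT0 _ _
  have hmle : ∀ i t, t ∈ σ → m i ≤ t.1 i := by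
    intro i t ht; simp only [m]; split_ifs
    · exact hT0 _ _
    · exact hsm i t ht
  have hsum1 : ∑ i, m i ≤ 1 := by
    rw [← (hTs t0.2).2]
    exact sum_le_sum fun i _ => hmle i t0 ((hσ _).2 ht0)
  have hsum : 1 - ∑ i, m i < e := by
    let r : ℝ := (1 - ∑ i, m i) / k
    have hr : 0 ≤ r := div_nonneg (by linarith) hk.le
    have hz : (fun i => m i + r) ∈ stdSimplex ℝ I := by
      refine ⟨fun i => add_nonneg (hm0 i) hr, ?_⟩
      rw [sum_add_distrib, sum_const, card_univ, nsmul_eq_mul, ← hkdef]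
      simp only [r]
      field_simp
      ring
    have := hT hz
    simp only [Set.mem_iUnion] at this
    obtain ⟨y, hy, hyd⟩ := this
    obtain ⟨i, hi, hyi⟩ := hdom ⟨y, hy⟩
    have h5 : y i ≤ m i := by
      simp only [m, if_neg hi]
      exact hyi _ ((hσ _).1 (hs i))
    have h6 := (dist_le_pi_dist _ _ i).trans_lt (Metric.mem_ball.1 hyd)
    rw [Real.dist_eq] at h6
    have h7 := (abs_lt.1 h6).2
    have h8 : r < e / k := by linarith
    exact (div_lt_div_iff_of_pos_right hk).1 h8
  have hclose : ∀ t ∈ σ, ∀ i, t.1 i < m i + e := by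
    intro t ht i
    have : t.1 i - m i ≤ ∑ j, (t.1 j - m j) :=
      single_le_sum (f := fun j => t.1 j - m j) (fun j _ => sub_nonneg.2 (hmle j t ht)) (mem_univ i)
    rw [sum_sub_distrib, (hTs t.2).2] at this
    linarith
  refine ⟨t0.1, hTs t0.2, fun j => ?_⟩
  by_cases hj : Sum.inr j ∈ B
  · left
    have := hclose t0 ((hσ _).2 ht0) j
    simpa [m, if_pos hj] using this
  · right
    obtain ⟨t, ht, rfl⟩ := hcol j hj
    refine ⟨t.1, hc t, ?_⟩
    rw [dist_pi_lt_iff he]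
    intro i
    have a1 := hclose t0 ((hσ _).2 ht0) i
    have a2 := hclose t ((hσ _).2 ht) i
    have a3 := hmle i t0 ((hσ _).2 ht0)
    have a4 := hmle i t ((hσ _).2 ht)
    rw [Real.dist_eq, abs_lt]
    constructor <;> linarith

open Filter Topology in
lemma kkm {I : Type} [Fintype I] [Nonempty I] (K : I → Set (I → ℝ))
    (hcl : ∀ i, IsClosed (K i))
    (hK : ∀ x ∈ stdSimplex ℝ I, ∃ i, x ∈ K i) :
    ∃ x ∈ stdSimplex ℝ I, ∀ j, x j = 0 ∨ x ∈ K j := by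
  have hpos : ∀ n : ℕ, (0 : ℝ) < 1 / ((n : ℝ) + 1) := fun n => Nat.one_div_pos_of_nat
  choose x hx hxj using fun n : ℕ => kkm_approx K hK (1 / ((n : ℝ) + 1)) (hpos n)
  obtain ⟨a, ha, φ, hφ, hlim⟩ := (isCompact_stdSimplex ℝ I).tendsto_subseq hx
  refine ⟨a, ha, fun j => ?_⟩
  by_cases h0 : a j = 0
  · exact Or.inl h0
  right
  have h0' : 0 < a j := lt_of_le_of_ne (ha.1 j) (Ne.symm h0)
  have he : Tendsto (fun n => 1 / ((φ n : ℝ) + 1)) atTop (𝓝 0) :=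
    tendsto_one_div_add_atTop_nhds_zero_nat.comp hφ.tendsto_atTop
  have hj : Tendsto (fun n => x (φ n) j) atTop (𝓝 (a j)) :=
    ((continuous_apply j).tendsto a).comp hlim
  have hev : ∀ᶠ n in atTop, 1 / ((φ n : ℝ) + 1) < x (φ n) j := he.eventually_lt hj h0'
  rw [← (hcl j).closure_eq, Metric.mem_closure_iff]
  intro ε hε
  have e1 : ∀ᶠ n in atTop, 1 / ((φ n : ℝ) + 1) < ε / 2 := he.eventually_lt_const (half_pos hε)
  have e2 : ∀ᶠ n in atTop, dist (x (φ n)) a < ε / 2 := (Metric.tendsto_nhds.1 hlim) _ (half_pos hε)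
  obtain ⟨n, h1, h2, h3⟩ := (hev.and (e1.and e2)).exists
  rcases hxj (φ n) j with h | ⟨y, hy, hd⟩
  · linarith
  · refine ⟨y, hy, ?_⟩
    have := dist_triangle_left a y (x (φ n))
    linarith

/-- If `P` is a (compact convex) polytope and `f : P → P` is a continuous map with
`f(F) ⊆ F` for every face `F` of `P`, then `f` is surjective. -/
theorem face_preserving_map_surjective (n : ℕ)
    (S : Finset (EuclideanSpace ℝ (Fin n)))
    (P : Set (EuclideanSpace ℝ (Fin n)))
    (hP : P = convexHull ℝ (S : Set (EuclideanSpace ℝ (Fin n))))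
    (f : C(P, P))
    (hf : ∀ F, IsFaceOf F P → ∀ x : P, (x : EuclideanSpace ℝ (Fin n)) ∈ F →
      (f x : EuclideanSpace ℝ (Fin n)) ∈ F) :
    Function.Surjective f := by
  intro y
  have hSne : S.Nonempty := by
    by_contra h
    rw [Finset.not_nonempty_iff_eq_empty] at h
    have := y.2
    simp [hP, h] at this
  have : Nonempty S := hSne.to_subtype
  have hSP : ∀ s : S, (s : EuclideanSpace ℝ (Fin n)) ∈ P := fun s => by
    rw [hP]; exact subset_convexHull ℝ _ s.2
  have hconv : Convex ℝ P := by rw [hP]; exact convex_convexHull ℝ _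
  let p : (S → ℝ) → EuclideanSpace ℝ (Fin n) := fun w => ∑ s, w s • (s : EuclideanSpace ℝ (Fin n))
  have hpP : ∀ w : stdSimplex ℝ S, p w.1 ∈ P := fun w =>
    hconv.sum_mem (fun s _ => w.2.1 s) w.2.2 (fun s _ => hSP s)
  have hpc : Continuous p := by fun_prop
  let q : stdSimplex ℝ S → P := fun w => ⟨p w.1, hpP w⟩
  have hq : Continuous q := by
    apply Continuous.subtype_mk
    exact hpc.comp continuous_subtype_val
  let v : stdSimplex ℝ S → EuclideanSpace ℝ (Fin n) := fun w => (y : EuclideanSpace ℝ (Fin n)) - f (q w)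
  have hv : Continuous v := by
    apply Continuous.sub continuous_const
    exact continuous_subtype_val.comp (f.continuous.comp hq)
  let K : S → Set (S → ℝ) := fun s =>
    Subtype.val '' {w : stdSimplex ℝ S | ∀ t : S, inner ℝ (v w) (t : EuclideanSpace ℝ (Fin n)) ≤ inner ℝ (v w) (s : EuclideanSpace ℝ (Fin n))}
  have hKcl : ∀ s, IsClosed (K s) := by
    intro s
    apply (isClosed_stdSimplex ℝ S).isClosedEmbedding_subtypeVal.isClosedMap
    simp only [Set.ofPred_forall]
    exact isClosed_iInter fun t => isClosed_le (hv.inner continuous_const) (hv.inner continuous_const)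
  obtain ⟨w, hw, hwK⟩ := kkm K hKcl (by
    intro w hw
    obtain ⟨s, -, hs⟩ := Finset.exists_max_image Finset.univ
      (fun s : S => inner ℝ (v ⟨w, hw⟩) (s : EuclideanSpace ℝ (Fin n))) Finset.univ_nonempty
    exact ⟨s, ⟨w, hw⟩, fun t => hs t (Finset.mem_univ _), rfl⟩)
  set W : stdSimplex ℝ S := ⟨w, hw⟩ with hW
  have hwK' : ∀ s, w s = 0 ∨ ∀ t : S, inner ℝ (v W) (t : EuclideanSpace ℝ (Fin n)) ≤ inner ℝ (v W) (s : EuclideanSpace ℝ (Fin n)) := by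
    intro s
    rcases hwK s with h | ⟨w', h', e⟩
    · exact Or.inl h
    · have : w' = W := Subtype.ext e
      subst this
      exact Or.inr h'
  refine ⟨q W, ?_⟩
  let l : EuclideanSpace ℝ (Fin n) →L[ℝ] ℝ := innerSL ℝ (v W)
  have hl : ∀ z, l z = inner ℝ (v W) z := fun z => rfl
  have hmaxS : ∀ t : S, l t ≤ l (p w) := by
    intro t
    have : l (p w) = ∑ s, w s * l s := by simp [p, map_sum]
    rw [this]
    calc l t = ∑ s, w s * l t := by rw [← Finset.sum_mul, hw.2, one_mul]
      _ ≤ ∑ s, w s * l s := by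
        apply Finset.sum_le_sum
        intro s _
        rcases hwK' s with h | h
        · simp [h]
        · exact mul_le_mul_of_nonneg_left (h t) (hw.1 s)
  have hmax : ∀ z ∈ P, l z ≤ l (p w) := by
    have : P ⊆ {z | l z ≤ l (p w)} := by
      rw [hP]
      apply convexHull_min
      · intro t ht
        exact hmaxS ⟨t, ht⟩
      · exact convex_halfSpace_le l.toLinearMap.isLinear _
    exact this
  have hface := hf {x ∈ P | l x = l (p w)} (Or.inr ⟨l, _, hmax, rfl⟩) (q W) ⟨hpP W, rfl⟩
  have h1 : l (f (q W)) = l (p w) := hface.2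
  have h2 : l y ≤ l (f (q W)) := h1 ▸ hmax y y.2
  have h3 : inner ℝ (v W) (v W) ≤ 0 := by
    have : inner ℝ (v W) (v W) = l y - l (f (q W)) := by
      rw [← map_sub]; rfl
    rw [this]; linarith
  have h4 : v W = 0 := inner_self_eq_zero.1 (le_antisymm h3 real_inner_self_nonneg)
  exact Subtype.ext (sub_eq_zero.1 h4).symm
end
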